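/- arXiv:2103.05336 — 2 statements merged into one kernel-verified Lean document; each statement's English description precedes it below -/
import Mathlib

section
/- Let <* = (x<, y<) be a regular double order on a finite set A and let σ be a permutation of A. Then the componentwise union <* ∪̄ (<*σ) — that is, the pair consisting of the transitive closure of x< ∪ (x<σ) and the transitive closure of y< ∪ (y<σ) — is a double order (equivalently, both transitive closures are irreflexive) if and only if σ is the identity. -/
variable {A : Type*}

/-- A strict partial order on `A`: an irreflexive and transitive relation. -/
def StrictPO (r : A → A → Prop) : Prop :=
  (∀ a, ¬ r a a) ∧ (∀ a b c, r a b → r b c → r a c)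

/-- A strict partial order is semi-linear if it is induced by a surjection onto
`{1,…,l}` (modeled as `Fin l`). -/
def SemiLinear (r : A → A → Prop) : Prop :=
  ∃ (l : ℕ) (h : A → Fin l), Function.Surjective h ∧ ∀ a b, r a b ↔ h a < h b

/-- The union `r ∪̄ s` of two relations: the transitive closure of their union. -/
def relUnion (r s : A → A → Prop) : A → A → Prop :=
  Relation.TransGen (fun a b => r a b ∨ s a b)

/-- A double order: a pair of strict partial orders such that any two distinct
elements are comparable by at least one of them. -/
def IsDoubleOrder (x y : A → A → Prop) : Prop :=
  StrictPO x ∧ StrictPO y ∧ ∀ a b : A, a ≠ b → x a b ∨ x b a ∨ y a b ∨ y b a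

/-- A regular double order: `x` is semi-linear and `x`-comparable elements are
`y`-incomparable. -/
def IsRegularDO (x y : A → A → Prop) : Prop :=
  IsDoubleOrder x y ∧ SemiLinear x ∧ ∀ a b, x a b → ¬ y a b ∧ ¬ y b a

/-- The right action of a permutation on a relation. -/
def permRel (σ : Equiv.Perm A) (r : A → A → Prop) : A → A → Prop :=
  fun a b => r (σ a) (σ b)

/-- A semi-regular double order: a componentwise union (transitive closure,
with both components irreflexive) of finitely many regular double orders. -/
def IsSemiRegular (x y : A → A → Prop) : Prop :=
  (∀ a, ¬ x a a) ∧ (∀ a, ¬ y a a) ∧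
  ∃ k : ℕ, 0 < k ∧ ∃ xs ys : Fin k → (A → A → Prop),
    (∀ i, IsRegularDO (xs i) (ys i)) ∧
    (∀ a b, x a b ↔ Relation.TransGen (fun u v => ∃ i, xs i u v) a b) ∧
    (∀ a b, y a b ↔ Relation.TransGen (fun u v => ∃ i, ys i u v) a b)

/-- The relation `y ∖ x`: `a (y ∖ x) b` iff `a y b` and `a, b` are `x`-incomparable. -/
def dminus (y x : A → A → Prop) : A → A → Prop :=
  fun a b => y a b ∧ ¬ x a b ∧ ¬ x b a

/-- The subset `U(<*)` of the space of functions `A → ℝ²` associated to a double order. -/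
def USet (x y : A → A → Prop) : Set (A → ℝ × ℝ) :=
  {f | ∀ a b, (x a b → (f a).1 < (f b).1) ∧ (y a b → (f a).2 < (f b).2)}

/-- On a finite type, an irreflexive relation `r` such that `r a` is stable under `σ`
never relates `a` to `σ a`. -/
theorem not_rel_perm_apply {A : Type*} [Finite A] {r : A → A → Prop} {σ : Equiv.Perm A} {a : A}
    (hirr : ¬ r a a) (hstep : ∀ b, r a b → r a (σ b)) : ¬ r a (σ a) := by
  intro h
  have hpow : ∀ n : ℕ, r a ((σ ^ (n + 1)) a) := by
    intro n
    induction n with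
    | zero => simpa using h
    | succ n ih =>
      rw [pow_succ' σ (n + 1), Equiv.Perm.mul_apply]
      exact hstep _ ih
  have hσ := hpow (orderOf σ - 1)
  rw [Nat.sub_add_cancel (orderOf_pos σ), pow_orderOf_eq_one] at hσ
  exact hirr hσ

/-- If `r ∪̄ (rσ)` is irreflexive then `σ` never reverses `r`. -/
theorem not_rel_perm_of_rel {A : Type*} {r : A → A → Prop} {σ : Equiv.Perm A}
    (hr : ∀ a, ¬ relUnion r (permRel σ r) a a) {a b : A} (hab : r a b) : ¬ r (σ b) (σ a) :=
  fun hba => hr a (.tail (.single (.inl hab)) (.inr hba))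

/-- A permutation of a finite type that is monotone for a strict partial order moves no point to
a comparable one. -/
theorem StrictPO.not_rel_perm {A : Type*} [Finite A] {r : A → A → Prop} (hr : StrictPO r)
    {σ : Equiv.Perm A} (hmono : ∀ a b, r a b → r (σ a) (σ b)) (a : A) :
    ¬ r a (σ a) ∧ ¬ r (σ a) a :=
  ⟨fun h => not_rel_perm_apply (hr.1 a) (fun _ hb => hr.2 _ _ _ h (hmono _ _ hb)) h,
    fun h => not_rel_perm_apply (r := fun u v => r v u) (hr.1 a)
      (fun _ hb => hr.2 _ _ _ (hmono _ _ hb) h) h⟩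

/-- If the function `h` is weakly order-preserved by `σ` then it is `σ`-invariant. -/
theorem apply_perm_eq_of_lt_imp_le {A ι : Type*} [Finite A] [LinearOrder ι] {h : A → ι}
    {σ : Equiv.Perm A} (hmono : ∀ a b, h a < h b → h (σ a) ≤ h (σ b)) (a : A) :
    h (σ a) = h a := by
  rcases lt_trichotomy (h (σ a)) (h a) with hlt | heq | hlt
  · exact (not_rel_perm_apply (r := fun u v => h v < h u) (lt_irrefl _)
      (fun b hb => (hmono b a hb).trans_lt hlt) hlt).elim
  · exact heq
  · exact (not_rel_perm_apply (r := fun u v => h u < h v) (lt_irrefl _)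
      (fun b hb => hlt.trans_le (hmono a b hb)) hlt).elim

/-- For a regular double order `<* = (x,y)` on a finite set and a
permutation `σ`, the componentwise union `<* ∪̄ (<*σ)` is a double order
(equivalently, both transitive closures are irreflexive) iff `σ` is the identity. -/
theorem stmt3 {A : Type*} [Fintype A] (x y : A → A → Prop)
    (hreg : IsRegularDO x y) (σ : Equiv.Perm A) :
    ((∀ a, ¬ relUnion x (permRel σ x) a a) ∧ (∀ a, ¬ relUnion y (permRel σ y) a a))
      ↔ σ = 1 := by
  obtain ⟨⟨hx, hy, htot⟩, ⟨l, h, -, hxh⟩, hxy⟩ := hreg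
  constructor
  · rintro ⟨hX, hY⟩
    have hinv : ∀ a, h (σ a) = h a := apply_perm_eq_of_lt_imp_le fun a b hab =>
      not_lt.1 fun hba =>
        not_rel_perm_of_rel hX ((hxh a b).2 hab) ((hxh _ _).2 hba)
    have hσx : ∀ a b, x (σ a) (σ b) ↔ x a b := fun a b => by
      rw [hxh, hxh, hinv, hinv]
    have hmono : ∀ a b, y a b → y (σ a) (σ b) := by
      intro a b hab
      have hne : σ a ≠ σ b := fun he => by
        rw [σ.injective he] at hab
        exact hy.1 _ hab
      rcases htot _ _ hne with h1 | h1 | h1 | h1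
      · exact ((hxy _ _ ((hσx _ _).1 h1)).1 hab).elim
      · exact ((hxy _ _ ((hσx _ _).1 h1)).2 hab).elim
      · exact h1
      · exact (not_rel_perm_of_rel hY hab h1).elim
    ext a
    by_contra hne
    obtain ⟨hlt, hgt⟩ := hy.not_rel_perm hmono a
    rcases htot _ _ hne with h1 | h1 | h1 | h1
    · exact absurd ((hxh _ _).1 h1) (by simp [hinv])
    · exact absurd ((hxh _ _).1 h1) (by simp [hinv])
    · exact hgt h1
    · exact hlt h1
  · rintro rfl
    have hirr : ∀ r : A → A → Prop, StrictPO r → ∀ a, ¬ relUnion r (permRel 1 r) a a := by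
      intro r hr a ha
      have : IsTrans A r := ⟨hr.2⟩
      refine hr.1 a ?_
      simpa [relUnion, permRel, Relation.transGen_eq_self] using ha
    exact ⟨hirr x hx, hirr y hy⟩
end

section
/- Let <*₁, …, <*_k be double orders on a finite set A. If the intersection ⋂ᵢ U(<*ᵢ) is nonempty, then it is a convex subset of the space of functions A → ℝ² and, with the subspace topology, it is a contractible topological space. In particular, every nonempty intersection of sets of the form U(<*) is contractible (the cover by the sets U(<*) is good). -/
variable {A : Type*}

/-- A convex combination of two strict inequalities is a strict inequality. -/
theorem convexCombo_lt_convexCombo {s t u v u' v' : ℝ} (hs : 0 ≤ s) (ht : 0 ≤ t)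
    (hst : s + t = 1) (h : u < v) (h' : u' < v') : s * u + t * u' < s * v + t * v' := by
  rcases hs.eq_or_lt with rfl | hs
  · obtain rfl : t = 1 := by linarith
    linarith
  · exact add_lt_add_of_lt_of_le (mul_lt_mul_of_pos_left h hs)
      (mul_le_mul_of_nonneg_left h'.le ht)

theorem convex_USet {A : Type*} (x y : A → A → Prop) : Convex ℝ (USet x y) := by
  intro f hf g hg s t hs ht hst a b
  exact ⟨fun h => convexCombo_lt_convexCombo hs ht hst ((hf a b).1 h) ((hg a b).1 h),
    fun h => convexCombo_lt_convexCombo hs ht hst ((hf a b).2 h) ((hg a b).2 h)⟩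

/-- Any nonempty intersection of sets `U(<*ᵢ)` associated to double
orders on a finite set `A` is convex and (with the subspace topology) contractible:
the cover by the sets `U(<*)` is good. -/
theorem stmt9 {A : Type*} [Fintype A] (k : ℕ)
    (xs ys : Fin k → (A → A → Prop))
    (hdo : ∀ i, IsDoubleOrder (xs i) (ys i))
    (hne : (⋂ i, USet (xs i) (ys i)).Nonempty) :
    Convex ℝ (⋂ i, USet (xs i) (ys i)) ∧
      ContractibleSpace ↥(⋂ i, USet (xs i) (ys i)) := by
  have hconv : Convex ℝ (⋂ i, USet (xs i) (ys i)) :=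
    convex_iInter fun i => convex_USet (xs i) (ys i)
  exact ⟨hconv, hconv.contractibleSpace hne⟩
end
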